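/- Let R be a commutative Noetherian local ring and let M be a finitely generated R-module. Assume that for every totally reflexive R-module X one has Ext^i_R(X, M) = 0 for all i ≥ 1. Then the reducing Gorenstein dimension of M equals the reducing projective dimension of M (as elements of ℕ ∪ {∞}). -/

import Mathlib

open CategoryTheory Pointwise

universe u

variable (R : Type u) [CommRing R]

/-- `Ext^n_R(X, Y) = 0`. -/
def ExtVanish (X Y : Type u) [AddCommGroup X] [Module R X]
    [AddCommGroup Y] [Module R Y] (n : ℕ) : Prop :=
  Subsingleton (((Ext R (ModuleCat.{u} R) n).obj
    (Opposite.op (ModuleCat.of R X))).obj (ModuleCat.of R Y))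

/-- A finitely generated module `X` is totally reflexive if the evaluation map to the
double dual is bijective and `Ext^i(X, R) = 0 = Ext^i(X^*, R)` for all `i ≥ 1`. -/
def IsTotallyReflexive (X : Type u) [AddCommGroup X] [Module R X] : Prop :=
  Module.Finite R X ∧
  Function.Bijective (Module.Dual.eval R X) ∧
  (∀ i : ℕ, 1 ≤ i → ExtVanish R X R i) ∧
  (∀ i : ℕ, 1 ≤ i → ExtVanish R (Module.Dual R X) R i)

/-- `0 → A → B → C → 0` is a short exact sequence. -/
def IsShortExact {A B C : Type u} [AddCommGroup A] [Module R A] [AddCommGroup B] [Module R B]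
    [AddCommGroup C] [Module R C] (f : A →ₗ[R] B) (g : B →ₗ[R] C) : Prop :=
  Function.Injective f ∧ Function.Surjective g ∧ Function.Exact f g

/-- Gorenstein dimension at most `n`: there is a resolution of length `≤ n`
by totally reflexive modules. -/
def GdimLE : ℕ → ModuleCat.{u} R → Prop
  | 0, M => IsTotallyReflexive R M
  | n + 1, M => ∃ (X K : ModuleCat.{u} R) (f : K →ₗ[R] X) (g : X →ₗ[R] M),
      IsTotallyReflexive R X ∧ IsShortExact R f g ∧ GdimLE n K

/-- Projective dimension at most `n`. -/
def PdimLE : ℕ → ModuleCat.{u} R → Prop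
  | 0, M => Module.Finite R M ∧ Module.Projective R M
  | n + 1, M => ∃ (X K : ModuleCat.{u} R) (f : K →ₗ[R] X) (g : X →ₗ[R] M),
      Module.Finite R X ∧ Module.Projective R X ∧ IsShortExact R f g ∧ PdimLE n K

/-- Injective dimension at most `n`. -/
def InjdimLE : ℕ → ModuleCat.{u} R → Prop
  | 0, M => Module.Injective R M
  | n + 1, M => ∃ (I C : ModuleCat.{u} R) (f : M →ₗ[R] I) (g : I →ₗ[R] C),
      Module.Injective R I ∧ IsShortExact R f g ∧ InjdimLE n C

/-- The Gorenstein dimension, as an element of `ℕ∞`. -/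
noncomputable def Gdim (M : ModuleCat.{u} R) : ℕ∞ :=
  sInf {n : ℕ∞ | ∃ m : ℕ, n = (m : ℕ∞) ∧ GdimLE R m M}

/-- The projective dimension, as an element of `ℕ∞`. -/
noncomputable def Pdim (M : ModuleCat.{u} R) : ℕ∞ :=
  sInf {n : ℕ∞ | ∃ m : ℕ, n = (m : ℕ∞) ∧ PdimLE R m M}

/-- A local ring is Gorenstein if it has finite injective dimension over itself. -/
def IsGorensteinRing : Prop :=
  ∃ n : ℕ, InjdimLE R n (ModuleCat.of R R)

/-- `IsSyzygy R n S K` : `S` is an `n`-th syzygy of `K`, i.e. there is an exact sequence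
`0 → S → F_{n-1} → ⋯ → F_0 → K → 0` with each `F_j` finitely generated free. -/
def IsSyzygy : ℕ → ModuleCat.{u} R → ModuleCat.{u} R → Prop
  | 0, S, K => Nonempty (S ≃ₗ[R] K)
  | n + 1, S, K => ∃ (W F : ModuleCat.{u} R) (f : W →ₗ[R] F) (g : F →ₗ[R] K),
      Module.Free R F ∧ Module.Finite R F ∧ IsShortExact R f g ∧ IsSyzygy n S W

/-- One step in a reducing sequence: a short exact sequence
`0 → K^{⊕a} → L → (Ω^n K)^{⊕b} → 0`. -/
def ReducingStep (K L : ModuleCat.{u} R) (a b n : ℕ) : Prop :=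
  ∃ (W : ModuleCat.{u} R) (f : (Fin a → K) →ₗ[R] L) (g : L →ₗ[R] (Fin b → W)),
    IsSyzygy R n W K ∧ IsShortExact R f g

/-- `M` admits a reducing sequence `K_0 = M, K_1, …, K_r` relative to the property `P`,
that is, short exact sequences `0 → K_{i-1}^{⊕a_i} → K_i → (Ω^{n_i}K_{i-1})^{⊕b_i} → 0`
with `a_i, b_i, n_i ≥ 1` and `P (K_r)`. -/
def HasReducingSeq (P : ModuleCat.{u} R → Prop) (M : ModuleCat.{u} R) (r : ℕ) : Prop :=
  ∃ (K : Fin (r + 1) → ModuleCat.{u} R) (a b n : Fin r → ℕ),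
    K 0 = M ∧ (∀ i, Module.Finite R (K i)) ∧
    (∀ i : Fin r, 1 ≤ a i ∧ 1 ≤ b i ∧ 1 ≤ n i ∧
      ReducingStep R (K i.castSucc) (K i.succ) (a i) (b i) (n i)) ∧
    P (K (Fin.last r))

/-- The reducing invariant attached to the finiteness property `P`. -/
noncomputable def ReducingDim (P : ModuleCat.{u} R → Prop) (M : ModuleCat.{u} R) : ℕ∞ :=
  sInf {n : ℕ∞ | ∃ r : ℕ, n = (r : ℕ∞) ∧ HasReducingSeq R P M r}

/-- The reducing Gorenstein dimension. -/
noncomputable def rGdim (M : ModuleCat.{u} R) : ℕ∞ :=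
  ReducingDim R (fun N => ∃ m : ℕ, GdimLE R m N) M

/-- The reducing projective dimension. -/
noncomputable def rPdim (M : ModuleCat.{u} R) : ℕ∞ :=
  ReducingDim R (fun N => ∃ m : ℕ, PdimLE R m N) M

/-- depth of a module over a local ring: `inf { i | Ext^i(k, M) ≠ 0 }`. -/
noncomputable def depth [IsLocalRing R] (M : ModuleCat.{u} R) : ℕ∞ :=
  sInf {n : ℕ∞ | ∃ i : ℕ, n = (i : ℕ∞) ∧
    ¬ ExtVanish R (R ⧸ IsLocalRing.maximalIdeal R) M i}

/-- maximal Cohen-Macaulay: depth equals the Krull dimension of the ring. -/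
def IsMCM [IsLocalRing R] (M : ModuleCat.{u} R) : Prop :=
  (depth R M : WithBot ℕ∞) = ringKrullDim R

/-- torsion-free: every non zero-divisor of `R` is a non zero-divisor on `M`. -/
def IsTorsionFreeModule (M : Type u) [AddCommGroup M] [Module R M] : Prop :=
  ∀ r ∈ nonZeroDivisors R, ∀ m : M, r • m = 0 → m = 0

/-!
The modules `N` with `Ext^i(X, N) = 0` for all totally reflexive `X` and all `i ≥ 1` are closed
under syzygies, since a totally reflexive `X` embeds in a free module with totally reflexive
cokernel; hence they are closed under reducing steps. It therefore suffices to show that such an `N`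
of Gorenstein dimension at most `n` has projective dimension at most `n`. For `n = 0`, the embedding
of `N` in a free module with totally reflexive cokernel splits. For `n > 0`, take an exact sequence
`0 → K → X → N → 0` with `X` totally reflexive and `K` of Gorenstein dimension at most `n - 1`, and
a free cover `F → X`. The kernel of the composite `F → N` is a syzygy of `N` and is also the kernel
of an epimorphism `K ⊕ F → X`, so its Gorenstein dimension is at most `n - 1`, and one inducts.
-/

universe v

section ExtComparison

variable {C : Type*} [Category* C] [Abelian C] [HasExt.{v} C] {X Y : C}

lemma extMk_zero_eq_zero_iff (P : ProjectiveResolution X) (f : P.complex.X 0 ⟶ Y)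
    (hf : P.complex.d 1 0 ≫ f = 0) : P.extMk f 1 rfl hf = 0 ↔ f = 0 := by
  have hd : P.cochainComplex.d 0 1 = 0 :=
    (P.cochainComplex.isZero_of_isStrictlyLE 0 1 (by simp)).eq_of_tgt _ _
  rw [← P.extEquivCohomologyClass.apply_eq_iff_eq, P.extEquivCohomologyClass_extMk,
    P.extEquivCohomologyClass_zero, CochainComplex.HomComplex.CohomologyClass.mk_eq_zero_iff,
    CochainComplex.HomComplex.Cocycle.toSingleMk_mem_coboundaries_iff _ _ _ _ _ 1 (by lia)]
  simp [hd, eq_comm (a := (0 : _ ⟶ Y))]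

lemma isZero_ext_iff_subsingleton (R : Type*) [Ring R] [Linear R C] [EnoughProjectives C]
    (X Y : C) (n : ℕ) :
    Limits.IsZero (((Ext R C n).obj (.op X)).obj Y) ↔ Subsingleton (Abelian.Ext.{v} X Y n) := by
  let P := ProjectiveResolution.of X
  have isZero_iff : Limits.IsZero (((Ext R C n).obj (.op X)).obj Y) ↔
      ∀ f : P.complex.X n ⟶ Y, P.complex.d (n + 1) n ≫ f = 0 →
        ∃ g, P.complex.d n ((ComplexShape.up ℕ).prev n) ≫ g = f := by
    rw [(P.isoExt (R := R) n Y).isZero_iff, ← HomologicalComplex.exactAt_iff_isZero_homology,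
      HomologicalComplex.exactAt_iff' _ _ n (n + 1) rfl (by simp), ShortComplex.moduleCat_exact_iff]
    rfl
  have extMk_eq_zero_iff (f : P.complex.X n ⟶ Y) (hf : P.complex.d (n + 1) n ≫ f = 0) :
      P.extMk f (n + 1) rfl hf = 0 ↔ ∃ g, P.complex.d n ((ComplexShape.up ℕ).prev n) ≫ g = f := by
    cases n with
    | zero => simpa [eq_comm (a := f)] using extMk_zero_eq_zero_iff P f hf
    | succ n => exact P.extMk_eq_zero_iff f _ rfl hf _ (by simp)
  rw [isZero_iff]
  constructor
  · refine fun h => subsingleton_of_forall_eq 0 fun α => ?_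
    obtain ⟨f, hf, rfl⟩ := P.extMk_surjective α (n + 1) rfl
    exact (extMk_eq_zero_iff f hf).2 (h f hf)
  · exact fun h f hf => (extMk_eq_zero_iff f hf).1 (Subsingleton.elim _ _)

end ExtComparison

section

variable {R}
variable {A B C X Y : Type u} [AddCommGroup A] [Module R A] [AddCommGroup B] [Module R B]
  [AddCommGroup C] [Module R C] [AddCommGroup X] [Module R X] [AddCommGroup Y] [Module R Y]

lemma extVanish_iff_subsingleton {n : ℕ} : ExtVanish R X Y n ↔
    Subsingleton (Abelian.Ext.{u} (ModuleCat.of R X) (ModuleCat.of R Y) n) := by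
  rw [← isZero_ext_iff_subsingleton R, ModuleCat.isZero_iff_subsingleton]
  rfl

namespace ExtVanish

variable {n : ℕ}

lemma of_projective [Module.Projective R X] (hn : 1 ≤ n) : ExtVanish R X Y n := by
  obtain ⟨n, rfl⟩ := Nat.exists_eq_add_of_le' hn
  have : Projective (ModuleCat.of R X) := (IsProjective.iff_projective X).1 inferInstance
  exact extVanish_iff_subsingleton.2 (Abelian.Ext.subsingleton_of_projective _ _ n)

lemma congr_left (h : ExtVanish R A Y n) (e : A ≃ₗ[R] B) : ExtVanish R B Y n :=
  have : Subsingleton _ := h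
  (((Ext R (ModuleCat.{u} R) n).mapIso e.toModuleIso.op).app
    (ModuleCat.of R Y)).toLinearEquiv.toEquiv.subsingleton

lemma of_leftInverse_right (h : ExtVanish R X B n) {i : A →ₗ[R] B} {r : B →ₗ[R] A}
    (hri : r ∘ₗ i = LinearMap.id) : ExtVanish R X A n := by
  let retract : Retract (ModuleCat.of R A) (ModuleCat.of R B) :=
    ⟨ModuleCat.ofHom i, ModuleCat.ofHom r, ModuleCat.hom_ext hri⟩
  have : Subsingleton _ := h
  let F := (Ext R (ModuleCat.{u} R) n).obj (.op (ModuleCat.of R X))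
  exact ((ModuleCat.mono_iff_injective (retract.map F).i).1 inferInstance).subsingleton

lemma pi {ι : Type} [Finite ι] {Y : ι → Type u} [∀ i, AddCommGroup (Y i)] [∀ i, Module R (Y i)]
    (h : ∀ i, ExtVanish R X (Y i) n) : ExtVanish R X (∀ i, Y i) n := by
  have := Fintype.ofFinite ι
  have (i : ι) := extVanish_iff_subsingleton.1 (h i)
  let biproduct := Limits.biproduct.isBilimit fun i => ModuleCat.of R (Y i)
  have : ExtVanish R X (Limits.biproduct fun i => ModuleCat.of R (Y i) : ModuleCat R) n :=
    extVanish_iff_subsingleton.2 (Abelian.Ext.addEquivBiproduct _ biproduct n).subsingleton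
  let e := (ModuleCat.biproductIsoPi fun i => ModuleCat.of R (Y i)).toLinearEquiv
  exact this.of_leftInverse_right (LinearEquiv.comp_symm e)

lemma of_finite_projective_right [Module.Finite R Y] [Module.Projective R Y]
    (h : ExtVanish R X R n) : ExtVanish R X Y n := by
  obtain ⟨k, p, hp⟩ := Module.Finite.exists_fin' R Y
  obtain ⟨s, hs⟩ := Module.projective_lifting_property p LinearMap.id hp
  exact (pi fun _ : Fin k => h).of_leftInverse_right hs

end ExtVanish

namespace IsShortExact

variable {f : A →ₗ[R] B} {g : B →ₗ[R] C}

lemma ker_subtype {g : B →ₗ[R] C} (hg : Function.Surjective g) :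
    IsShortExact R (LinearMap.ker g).subtype g :=
  ⟨Subtype.val_injective, hg, LinearMap.exact_subtype_ker_map g⟩

lemma inl_snd : IsShortExact R (LinearMap.inl R A B) (LinearMap.snd R A B) :=
  ⟨LinearMap.inl_injective, LinearMap.snd_surjective, Function.Exact.inl_snd⟩

lemma inl_comp_prodMap_id (h : IsShortExact R f g) :
    IsShortExact R (LinearMap.inl R B X ∘ₗ f) (g.prodMap (LinearMap.id (M := X))) := by
  refine ⟨LinearMap.inl_injective.comp h.1, h.2.1.prodMap Function.surjective_id, ?_⟩
  rintro ⟨b, x⟩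
  simp [h.2.2 b, eq_comm (a := (0 : X))]

-- `ker (f.coprod p)` is the pullback of `g` and `g ∘ₗ p` up to the sign of its first component.
lemma ker_coprod (h : IsShortExact R f g) {p : X →ₗ[R] B} (hp : Function.Surjective p) :
    IsShortExact R (LinearMap.snd R A X ∘ₗ (LinearMap.ker (f.coprod p)).subtype) (g ∘ₗ p) := by
  refine ⟨?_, h.2.1.comp hp, fun x => ⟨fun hx => ?_, ?_⟩⟩
  · rw [injective_iff_map_eq_zero]
    rintro ⟨⟨a, x⟩, hax⟩ (rfl : x = 0)
    have ha : a = 0 := h.1 (by simpa using hax)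
    simp [ha]
  · obtain ⟨a, ha⟩ := (h.2.2 (p x)).1 hx
    exact ⟨⟨(-a, x), by simp [ha]⟩, rfl⟩
  · rintro ⟨⟨⟨a, x⟩, hax⟩, rfl⟩
    have hpx : p x = f (-a) := by
      rw [map_neg]
      exact eq_neg_of_add_eq_zero_right hax
    exact (h.2.2 (p x)).2 ⟨-a, hpx.symm⟩

lemma restrict_ker_comp (h : IsShortExact R f g) (q : C →ₗ[R] X) :
    IsShortExact R
      (f.codRestrict (LinearMap.ker (q ∘ₗ g)) fun a => by simp [h.2.2.apply_apply_eq_zero a])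
      (g.restrict (p := LinearMap.ker (q ∘ₗ g)) (q := LinearMap.ker q) fun _ hb => hb) := by
  refine ⟨fun a a' haa' => h.1 (congrArg Subtype.val haa'), ?_, fun b => ⟨fun hb => ?_, ?_⟩⟩
  · rintro ⟨c, hc⟩
    obtain ⟨b, rfl⟩ := h.2.1 c
    exact ⟨⟨b, hc⟩, rfl⟩
  · obtain ⟨a, ha⟩ := (h.2.2 b).1 (congrArg Subtype.val hb)
    exact ⟨a, Subtype.ext ha⟩
  · rintro ⟨a, rfl⟩
    exact Subtype.ext (h.2.2.apply_apply_eq_zero a)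

lemma exists_shortExact (h : IsShortExact R f g) :
    ∃ w : ModuleCat.ofHom f ≫ ModuleCat.ofHom g = 0,
      (ShortComplex.mk (ModuleCat.ofHom f) (ModuleCat.ofHom g) w).ShortExact :=
  ⟨ModuleCat.hom_ext h.2.2.linearMap_comp_eq_zero,
    ModuleCat.shortComplex_shortExact _ h.2.2 h.1 h.2.1⟩

variable {n : ℕ}

lemma extVanish_middle (h : IsShortExact R f g) (hA : ExtVanish R A Y n)
    (hC : ExtVanish R C Y n) : ExtVanish R B Y n := by
  rw [extVanish_iff_subsingleton] at *
  obtain ⟨w, hS⟩ := h.exists_shortExact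
  refine subsingleton_of_forall_eq 0 fun β => ?_
  obtain ⟨γ, rfl⟩ := Abelian.Ext.contravariant_sequence_exact₂ hS _ β (Subsingleton.elim _ _)
  rw [Subsingleton.elim γ 0, Abelian.Ext.comp_zero]

lemma extVanish_left (h : IsShortExact R f g) (hB : ExtVanish R B Y n)
    (hC : ExtVanish R C Y (n + 1)) : ExtVanish R A Y n := by
  rw [extVanish_iff_subsingleton] at *
  obtain ⟨w, hS⟩ := h.exists_shortExact
  refine subsingleton_of_forall_eq 0 fun α => ?_
  obtain ⟨β, rfl⟩ := Abelian.Ext.contravariant_sequence_exact₁ hS _ α (add_comm 1 n)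
    (Subsingleton.elim _ _)
  rw [Subsingleton.elim β 0, Abelian.Ext.comp_zero]

lemma extVanish_right (h : IsShortExact R f g) (hA : ExtVanish R A Y n)
    (hB : ExtVanish R B Y (n + 1)) : ExtVanish R C Y (n + 1) := by
  rw [extVanish_iff_subsingleton] at *
  obtain ⟨w, hS⟩ := h.exists_shortExact
  refine subsingleton_of_forall_eq 0 fun γ => ?_
  obtain ⟨α, rfl⟩ := Abelian.Ext.contravariant_sequence_exact₃ hS _ γ (Subsingleton.elim _ _)
    (add_comm 1 n)
  rw [Subsingleton.elim α 0, Abelian.Ext.comp_zero]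

lemma exists_comp_eq (h : IsShortExact R f g) (hC : ExtVanish R C Y 1) (φ : A →ₗ[R] Y) :
    ∃ ψ : B →ₗ[R] Y, ψ ∘ₗ f = φ := by
  rw [extVanish_iff_subsingleton] at hC
  obtain ⟨w, hS⟩ := h.exists_shortExact
  obtain ⟨β, hβ⟩ := Abelian.Ext.contravariant_sequence_exact₁ hS _
    (Abelian.Ext.mk₀ (ModuleCat.ofHom φ)) (add_zero 1) (Subsingleton.elim _ _)
  obtain ⟨ψ, rfl⟩ := Abelian.Ext.mk₀_bijective _ _ |>.surjective β
  rw [Abelian.Ext.mk₀_comp_mk₀] at hβ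
  exact ⟨ψ.hom, congrArg ModuleCat.Hom.hom ((Abelian.Ext.mk₀_bijective _ _).injective hβ)⟩

lemma extVanish_one_right (h : IsShortExact R f g) (hB : ExtVanish R B Y 1)
    (hφ : ∀ φ : A →ₗ[R] Y, ∃ ψ : B →ₗ[R] Y, ψ ∘ₗ f = φ) : ExtVanish R C Y 1 := by
  rw [extVanish_iff_subsingleton] at *
  obtain ⟨w, hS⟩ := h.exists_shortExact
  refine subsingleton_of_forall_eq 0 fun γ => ?_
  obtain ⟨α, rfl⟩ := Abelian.Ext.contravariant_sequence_exact₃ hS _ γ (Subsingleton.elim _ _)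
    (add_zero 1)
  obtain ⟨φ, rfl⟩ := (Abelian.Ext.mk₀_bijective _ _).surjective α
  obtain ⟨ψ, hψ⟩ := hφ φ.hom
  have hφψ : ModuleCat.ofHom f ≫ ModuleCat.ofHom ψ = φ := ModuleCat.hom_ext hψ
  rw [← hφψ, ← Abelian.Ext.mk₀_comp_mk₀]
  exact hS.extClass_comp_assoc _

lemma extVanish_to_middle (h : IsShortExact R f g) (hA : ExtVanish R X A n)
    (hC : ExtVanish R X C n) : ExtVanish R X B n := by
  rw [extVanish_iff_subsingleton] at *
  obtain ⟨w, hS⟩ := h.exists_shortExact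
  refine subsingleton_of_forall_eq 0 fun β => ?_
  obtain ⟨α, rfl⟩ := Abelian.Ext.covariant_sequence_exact₂ _ hS β (Subsingleton.elim _ _)
  rw [Subsingleton.elim α 0, Abelian.Ext.zero_comp]

lemma extVanish_to_left (h : IsShortExact R f g) (hC : ExtVanish R X C n)
    (hB : ExtVanish R X B (n + 1)) : ExtVanish R X A (n + 1) := by
  rw [extVanish_iff_subsingleton] at *
  obtain ⟨w, hS⟩ := h.exists_shortExact
  refine subsingleton_of_forall_eq 0 fun α => ?_
  obtain ⟨γ, rfl⟩ := Abelian.Ext.covariant_sequence_exact₁ _ hS α (Subsingleton.elim _ _) rfl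
  rw [Subsingleton.elim γ 0, Abelian.Ext.zero_comp]

lemma dualMap (h : IsShortExact R f g) (hC : ExtVanish R C R 1) :
    IsShortExact R g.dualMap f.dualMap :=
  ⟨LinearMap.dualMap_injective_of_surjective h.2.1, h.exists_comp_eq hC,
    LinearMap.exact_lcomp_of_exact_of_surjective R h.2.2 h.2.1⟩

lemma bijective_dual_eval_left (h : IsShortExact R f g) (hC : ExtVanish R C R 1)
    (reflB : Function.Bijective (Module.Dual.eval R B))
    (reflC : Function.Injective (Module.Dual.eval R C)) :
    Function.Bijective (Module.Dual.eval R A) := by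
  have hdual := h.dualMap hC
  have eval_f (a : A) : Module.Dual.eval R B (f a) = f.dualMap.dualMap (Module.Dual.eval R A a) :=
    rfl
  constructor
  · intro a a' haa'
    apply h.1
    apply reflB.1
    rw [eval_f, eval_f, haa']
  · intro φ
    obtain ⟨b, hb⟩ := reflB.2 (f.dualMap.dualMap φ)
    have hgb : g b = 0 := by
      apply reflC
      calc Module.Dual.eval R C (g b)
        _ = g.dualMap.dualMap (f.dualMap.dualMap φ) := by rw [← hb]; rfl
        _ = φ ∘ₗ (f.dualMap ∘ₗ g.dualMap) := rfl
        _ = 0 := by rw [hdual.2.2.linearMap_comp_eq_zero, LinearMap.comp_zero]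
        _ = Module.Dual.eval R C 0 := (map_zero _).symm
    obtain ⟨a, rfl⟩ := (h.2.2 b).1 hgb
    exact ⟨a, LinearMap.dualMap_injective_of_surjective hdual.2.1 hb⟩

end IsShortExact

namespace IsTotallyReflexive

lemma of_finite_projective [Module.Finite R X] [Module.Projective R X] :
    IsTotallyReflexive R X :=
  ⟨inferInstance, Module.bijective_dual_eval R X, fun _ => ExtVanish.of_projective,
    fun _ => ExtVanish.of_projective⟩

lemma prod (hX : IsTotallyReflexive R X) (hY : IsTotallyReflexive R Y) :
    IsTotallyReflexive R (X × Y) := by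
  obtain ⟨_, reflX, extX, ext_dualX⟩ := hX
  obtain ⟨_, reflY, extY, ext_dualY⟩ := hY
  have : Module.IsReflexive R X := ⟨reflX⟩
  have : Module.IsReflexive R Y := ⟨reflY⟩
  have dual_shortExact := IsShortExact.inl_snd (A := X) |>.dualMap (extY 1 le_rfl)
  exact ⟨inferInstance, Module.bijective_dual_eval R (X × Y),
    fun i hi => IsShortExact.inl_snd.extVanish_middle (extX i hi) (extY i hi),
    fun i hi => dual_shortExact.extVanish_middle (ext_dualY i hi) (ext_dualX i hi)⟩

variable [IsNoetherianRing R]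

lemma dual (hX : IsTotallyReflexive R X) : IsTotallyReflexive R (Module.Dual R X) := by
  obtain ⟨_, refl, ext, ext_dual⟩ := hX
  have : Module.IsReflexive R X := ⟨refl⟩
  exact ⟨inferInstance, Module.bijective_dual_eval R _, ext_dual,
    fun i hi => (ext i hi).congr_left (Module.evalEquiv R X)⟩

lemma ker (hB : IsTotallyReflexive R B) (hC : IsTotallyReflexive R C)
    {g : B →ₗ[R] C} (hg : Function.Surjective g) : IsTotallyReflexive R (LinearMap.ker g) := by
  obtain ⟨_, reflB, extB, ext_dualB⟩ := hB
  obtain ⟨_, reflC, extC, ext_dualC⟩ := hC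
  have h := IsShortExact.ker_subtype hg
  have hdual := h.dualMap (extC 1 le_rfl)
  refine ⟨inferInstance, h.bijective_dual_eval_left (extC 1 le_rfl) reflB reflC.1,
    fun i hi => h.extVanish_left (extB i hi) (extC (i + 1) (by lia)), ?_⟩
  rintro (_ | _ | i) hi
  · contradiction
  · refine hdual.extVanish_one_right (ext_dualB 1 le_rfl) fun φ => ?_
    obtain ⟨c, rfl⟩ := reflC.2 φ
    obtain ⟨b, rfl⟩ := hg c
    exact ⟨Module.Dual.eval R B b, rfl⟩
  · exact hdual.extVanish_right (ext_dualC (i + 1) (by lia)) (ext_dualB (i + 2) hi)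

-- Dualize a finite free cover of the dual.
lemma exists_cosyzygy (hX : IsTotallyReflexive R X) :
    ∃ (F X' : ModuleCat.{u} R) (f : X →ₗ[R] F) (g : F →ₗ[R] X'), Module.Finite R F ∧
      Module.Projective R F ∧ IsTotallyReflexive R X' ∧ IsShortExact R f g := by
  have := hX.dual.1
  obtain ⟨n, p, hp⟩ := Module.Finite.exists_fin' R (Module.Dual R X)
  have hker := of_finite_projective.ker hX.dual hp
  have hdual := (IsShortExact.ker_subtype hp).dualMap (hX.2.2.2 1 le_rfl)
  let eval := LinearEquiv.ofBijective (Module.Dual.eval R X) hX.2.1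
  refine ⟨.of R (Module.Dual R (Fin n → R)), .of R (Module.Dual R (LinearMap.ker p)),
    p.dualMap ∘ₗ eval, (LinearMap.ker p).subtype.dualMap, ?_, ?_, hker.dual,
    hdual.1.comp eval.injective, hdual.2.1, ?_⟩
  · exact inferInstanceAs (Module.Finite R (Module.Dual R (Fin n → R)))
  · exact inferInstanceAs (Module.Projective R (Module.Dual R (Fin n → R)))
  · exact LinearEquiv.precomp_exact_iff_exact.2 hdual.2.2

end IsTotallyReflexive

namespace GdimLE

variable {K : ModuleCat.{u} R} {n : ℕ}

lemma prod (hK : GdimLE R n K) (hX : IsTotallyReflexive R X) : GdimLE R n (.of R (K × X)) := by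
  cases n with
  | zero => exact IsTotallyReflexive.prod hK hX
  | succ n =>
    obtain ⟨G, K', f, g, hG, hfg, hK'⟩ := hK
    exact ⟨.of R (G × X), K', _, _, hG.prod hX, hfg.inl_comp_prodMap_id, hK'⟩

lemma ker [IsNoetherianRing R] (hK : GdimLE R n K) (hX : IsTotallyReflexive R X) {q : K →ₗ[R] X}
    (hq : Function.Surjective q) : GdimLE R n (.of R (LinearMap.ker q)) := by
  cases n with
  | zero => exact IsTotallyReflexive.ker hK hX hq
  | succ n =>
    obtain ⟨G, K', f, g, hG, hfg, hK'⟩ := hK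
    exact ⟨.of R (LinearMap.ker (q ∘ₗ g)), K', _, _, hG.ker hX (hq.comp hfg.2.1),
      hfg.restrict_ker_comp q, hK'⟩

end GdimLE

lemma PdimLE.gdimLE {n : ℕ} {N : ModuleCat.{u} R} (hN : PdimLE R n N) : GdimLE R n N := by
  induction n generalizing N with
  | zero =>
    obtain ⟨_, _⟩ := hN
    exact IsTotallyReflexive.of_finite_projective
  | succ n ih =>
    obtain ⟨F, K, f, g, _, _, hfg, hK⟩ := hN
    exact ⟨F, K, f, g, .of_finite_projective, hfg, ih hK⟩

variable (R) in
/-- Membership in the right `Ext`-orthogonal class of the totally reflexive modules: this is the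
hypothesis on `M` in the main theorem, which has to be propagated along reducing sequences. -/
def TotallyReflexivePerp (N : Type u) [AddCommGroup N] [Module R N] : Prop :=
  ∀ X : ModuleCat.{u} R, IsTotallyReflexive R X → ∀ i : ℕ, 1 ≤ i → ExtVanish R X N i

namespace TotallyReflexivePerp

variable [IsNoetherianRing R]

lemma of_isShortExact_finite_projective [Module.Finite R B] [Module.Projective R B]
    {f : A →ₗ[R] B} {g : B →ₗ[R] C} (hC : TotallyReflexivePerp R C) (h : IsShortExact R f g) :
    TotallyReflexivePerp R A := by
  intro X hX i hi
  obtain ⟨F, X', _, _, _, _, hX', cosyzygy⟩ := hX.exists_cosyzygy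
  refine cosyzygy.extVanish_left (.of_projective hi) ?_
  exact h.extVanish_to_left (hC X' hX' i hi)
    (.of_finite_projective_right (hX'.2.2.1 (i + 1) (by lia)))

lemma of_isSyzygy {n : ℕ} {W K : ModuleCat.{u} R} (hK : TotallyReflexivePerp R K)
    (hW : IsSyzygy R n W K) : TotallyReflexivePerp R W := by
  induction n generalizing K with
  | zero =>
    obtain ⟨e⟩ := hW
    exact fun X hX i hi => (hK X hX i hi).of_leftInverse_right (LinearEquiv.symm_comp e)
  | succ n ih =>
    obtain ⟨V, F, f, g, _, _, hfg, hWV⟩ := hW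
    exact ih (hK.of_isShortExact_finite_projective hfg) hWV

lemma of_reducingStep {K L : ModuleCat.{u} R} {a b n : ℕ} (hK : TotallyReflexivePerp R K)
    (hKL : ReducingStep R K L a b n) : TotallyReflexivePerp R L := by
  obtain ⟨W, f, g, hW, hfg⟩ := hKL
  exact fun X hX i hi => hfg.extVanish_to_middle (.pi fun _ => hK X hX i hi)
    (.pi fun _ => hK.of_isSyzygy hW X hX i hi)

lemma projective (hX : TotallyReflexivePerp R X) (reflX : IsTotallyReflexive R X) :
    Module.Projective R X := by
  obtain ⟨F, X', f, g, _, _, hX', hfg⟩ := reflX.exists_cosyzygy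
  obtain ⟨r, hr⟩ := hfg.exists_comp_eq (hX X' hX' 1 le_rfl) LinearMap.id
  exact .of_split f r hr

lemma pdimLE {n : ℕ} {N : ModuleCat.{u} R} (hN : TotallyReflexivePerp R N) (hG : GdimLE R n N) :
    PdimLE R n N := by
  induction n generalizing N with
  | zero => exact ⟨hG.1, hN.projective hG⟩
  | succ n ih =>
    obtain ⟨X, K, f, g, hX, hfg, hK⟩ := hG
    have := hX.1
    obtain ⟨k, p, hp⟩ := Module.Finite.exists_fin' R X
    have hfp : Function.Surjective (f.coprod p) := fun x =>
      let ⟨y, hy⟩ := hp x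
      ⟨(0, y), by simp [hy]⟩
    have hker := hfg.ker_coprod hp
    have gdim_ker : GdimLE R n (.of R (LinearMap.ker (f.coprod p))) :=
      GdimLE.ker (hK.prod .of_finite_projective) hX hfp
    exact ⟨.of R (Fin k → R), .of R (LinearMap.ker (f.coprod p)), _, _,
      inferInstanceAs (Module.Finite R (Fin k → R)),
      inferInstanceAs (Module.Projective R (Fin k → R)), hker,
      ih (hN.of_isShortExact_finite_projective hker) gdim_ker⟩

lemma exists_gdimLE_iff_exists_pdimLE {N : ModuleCat.{u} R} (hN : TotallyReflexivePerp R N) :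
    (∃ n, GdimLE R n N) ↔ ∃ n, PdimLE R n N :=
  exists_congr fun _ => ⟨hN.pdimLE, PdimLE.gdimLE⟩

end TotallyReflexivePerp

section ReducingDim

variable {S P Q : ModuleCat.{u} R → Prop} {M : ModuleCat.{u} R}

lemma HasReducingSeq.imp {r : ℕ} (hM : S M)
    (hS : ∀ {K L a b n}, S K → ReducingStep R K L a b n → S L) (hPQ : ∀ N, S N → P N → Q N)
    (h : HasReducingSeq R P M r) : HasReducingSeq R Q M r := by
  obtain ⟨K, a, b, n, rfl, hfin, hstep, hlast⟩ := h
  have hSK (i : Fin (r + 1)) : S (K i) :=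
    Fin.induction hM (fun i hi => hS hi (hstep i).2.2.2) i
  exact ⟨K, a, b, n, rfl, hfin, hstep, hPQ _ (hSK _) hlast⟩

lemma reducingDim_congr (hM : S M) (hS : ∀ {K L a b n}, S K → ReducingStep R K L a b n → S L)
    (hPQ : ∀ N, S N → (P N ↔ Q N)) : ReducingDim R P M = ReducingDim R Q M := by
  have hasReducingSeq_iff (r : ℕ) : HasReducingSeq R P M r ↔ HasReducingSeq R Q M r :=
    ⟨.imp hM hS fun N hN => (hPQ N hN).1, .imp hM hS fun N hN => (hPQ N hN).2⟩
  simp only [ReducingDim, hasReducingSeq_iff]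

end ReducingDim

end

theorem stmt7_general (R : Type u) [CommRing R] [IsNoetherianRing R]
    (M : Type u) [AddCommGroup M] [Module R M]
    (hext : ∀ X : ModuleCat.{u} R, IsTotallyReflexive R X →
      ∀ i : ℕ, 1 ≤ i → ExtVanish R X M i) :
    rGdim R (ModuleCat.of R M) = rPdim R (ModuleCat.of R M) :=
  reducingDim_congr (S := fun N => TotallyReflexivePerp R N) hext .of_reducingStep
    fun _ => TotallyReflexivePerp.exists_gdimLE_iff_exists_pdimLE

theorem stmt7 (R : Type u) [CommRing R] [IsNoetherianRing R] [IsLocalRing R]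
    (M : Type u) [AddCommGroup M] [Module R M] [Module.Finite R M]
    (hext : ∀ X : ModuleCat.{u} R, IsTotallyReflexive R X →
      ∀ i : ℕ, 1 ≤ i → ExtVanish R X M i) :
    rGdim R (ModuleCat.of R M) = rPdim R (ModuleCat.of R M) :=
  stmt7_general R M hext
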